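/- arXiv:2307.01287 — 2 statements merged into one kernel-verified Lean document; each statement's English description precedes it below -/
import Mathlib

section
/- Let a ∈ 𝔻 and f ∈ H². Then f ∘ φ_a = f if and only if f = h ∘ φ_{ω_a} for some even h ∈ H², and f ∘ φ_a = −f if and only if f = h ∘ φ_{ω_a} for some odd h ∈ H². In other words, N(C_a − 1) = C_{ω_a}(𝓔) and N(C_a + 1) = C_{ω_a}(𝓞), where 𝓔 and 𝓞 are the subspaces of even and odd functions of H² and C_{ω_a}h = h ∘ φ_{ω_a}. -/
/-!
With `w = ω_a`, the involution `φ_w` conjugates `φ_a` to `z ↦ -z`: it swaps `w` and `0`, so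
`φ_w ∘ φ_a ∘ φ_w` is an involutive automorphism of the disk fixing `0` (`phi_phi_omegaPt` checks the
identity directly). Hence `f` is `φ_a`-invariant or anti-invariant exactly when `h = f ∘ φ_w` is even
or odd, and `f = h ∘ φ_w` since `φ_w` is an involution (`key`).

The analytic point is that `h` is again in `H²` (`memH2_comp`). In the Hilbert space of coefficient
sequences let `S` be the shift. The Blaschke operator `M = (w - S)(1 - conj w S)⁻¹` is an isometry, and
the kernel vector `k = (1 - conj w S)⁻¹ 1` is orthogonal to its range. Therefore the vectors `M ^ n k`,
which represent `φ_w ^ n / (1 - conj w z)`, are orthogonal of equal norm, and `∑ c n • M ^ n k`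
converges for every square-summable `c`. Applying `1 - conj w S` to the sum yields an element of `H²`
whose point evaluations are `∑ c n φ_w(z) ^ n`.
-/

/-- The Möbius involution `φ_a(z) = (a - z)/(1 - conj a · z)`. -/
noncomputable def phi (a z : ℂ) : ℂ := (a - z) / (1 - (starRingEnd ℂ) a * z)

/-- The fixed point `ω_a` of `φ_a` in the open unit disk. -/
noncomputable def omegaPt (a : ℂ) : ℂ :=
  if a = 0 then 0 else (1 - (Real.sqrt (1 - ‖a‖ ^ 2) : ℂ)) / (starRingEnd ℂ) a

/-- `f` belongs to the Hardy space `H²` of the disk, with Taylor coefficients `c`. -/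
def IsH2Rep (f : ℂ → ℂ) (c : ℕ → ℂ) : Prop :=
  Summable (fun n => ‖c n‖ ^ 2) ∧
    ∀ z : ℂ, ‖z‖ < 1 → HasSum (fun n => c n * z ^ n) (f z)

/-- Membership in the Hardy space `H²` of the disk. -/
def MemH2 (f : ℂ → ℂ) : Prop := ∃ c : ℕ → ℂ, IsH2Rep f c

/-! ### Möbius involutions -/

/-- With `r = √(1 - |a|²)`, both facts come from `r² = 1 - |a|²`. The identity says that `ω_a` is the
midpoint, in the hyperbolic sense, of `0` and `a`. -/
theorem omegaPt_spec (a : ℂ) (ha : ‖a‖ < 1) : ‖omegaPt a‖ < 1 ∧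
   a * (1 + (starRingEnd ℂ) (omegaPt a) * omegaPt a) = 2 * omegaPt a := by
  unfold omegaPt
  split_ifs with h
  · simp [h]
  · have h0 : 0 < ‖a‖ := norm_pos_iff.mpr h
    have hc : (starRingEnd ℂ) a ≠ 0 := by simpa using h
    set r := Real.sqrt (1 - ‖a‖ ^ 2) with hr
    have hr2 : r ^ 2 = 1 - ‖a‖ ^ 2 := Real.sq_sqrt (by nlinarith)
    have hr0 : 0 < r := Real.sqrt_pos.mpr (by nlinarith)
    constructor
    · have : ‖(1 : ℂ) - (r : ℂ)‖ = 1 - r := by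
        rw [← Complex.ofReal_one, ← Complex.ofReal_sub, Complex.norm_real, Real.norm_of_nonneg]
        nlinarith
      rw [norm_div, this, RCLike.norm_conj, div_lt_one h0]
      nlinarith
    · have hr2' : (r : ℂ) ^ 2 = 1 - (starRingEnd ℂ) a * a := by
        rw [Complex.conj_mul', ← Complex.ofReal_pow, hr2]; push_cast; rfl
      simp only [map_div₀, map_sub, map_one, Complex.conj_ofReal, Complex.conj_conj]
      field_simp
      linear_combination hr2'

theorem phi_denom (w z : ℂ) (hw : ‖w‖ < 1) (hz : ‖z‖ < 1) : 1 - (starRingEnd ℂ) w * z ≠ 0 := by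
  intro h
  have : ‖(starRingEnd ℂ) w * z‖ = 1 := by rw [← sub_eq_zero.mp h]; simp
  rw [norm_mul, RCLike.norm_conj] at this
  nlinarith [norm_nonneg w, norm_nonneg z]

theorem norm_phi (w z : ℂ) (hw : ‖w‖ < 1) (hz : ‖z‖ < 1) : ‖phi w z‖ < 1 := by
  unfold phi
  rw [norm_div, div_lt_one (norm_pos_iff.mpr (phi_denom w z hw hz)),
    ← sq_lt_sq₀ (norm_nonneg _) (norm_nonneg _)]
  have hw' : ‖w‖ ^ 2 < 1 := by nlinarith [norm_nonneg w]
  have hz' : ‖z‖ ^ 2 < 1 := by nlinarith [norm_nonneg z]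
  simp only [← Complex.normSq_eq_norm_sq, Complex.normSq_apply] at *
  simp
  nlinarith

theorem phi_mul_denom (w z : ℂ) (hw : ‖w‖ < 1) (hz : ‖z‖ < 1) :
    phi w z * (1 - (starRingEnd ℂ) w * z) = w - z :=
  div_mul_cancel₀ _ (phi_denom w z hw hz)

theorem phi_phi (w z : ℂ) (hw : ‖w‖ < 1) (hz : ‖z‖ < 1) : phi w (phi w z) = z := by
  have h2 := phi_denom w _ hw (norm_phi w z hw hz)
  have h := phi_mul_denom w z hw hz
  conv_lhs => rw [phi]
  rw [div_eq_iff h2]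
  linear_combination -h

/-- `φ_{ω_a}` conjugates `φ_a` to `z ↦ -z`. After clearing denominators this is a consequence of
`a (1 + |ω_a|²) = 2 ω_a` and its complex conjugate. -/
theorem phi_phi_omegaPt (a z : ℂ) (ha : ‖a‖ < 1) (hz : ‖z‖ < 1) :
    phi a (phi (omegaPt a) z) = phi (omegaPt a) (-z) := by
  obtain ⟨hw, h⟩ := omegaPt_spec a ha
  set w := omegaPt a
  have hnz : ‖-z‖ < 1 := by simpa
  have h1 := phi_denom a _ ha (norm_phi w z hw hz)
  have h2 := phi_denom w z hw hz
  have h3 := phi_denom w _ hw hnz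
  have h4 := phi_mul_denom w z hw hz
  have hc := congrArg (starRingEnd ℂ) h
  simp only [map_mul, map_add, map_one, Complex.conj_conj, map_ofNat] at hc
  have hpos : 1 + (starRingEnd ℂ) w * w ≠ 0 := by
    have := phi_denom w (-w) hw (by simpa)
    simpa using this
  conv_lhs => rw [phi]
  conv_rhs => rw [phi]
  rw [div_eq_div_iff h1 h3]
  apply mul_right_cancel₀ h2
  apply mul_right_cancel₀ hpos
  set p := phi w z
  set W := (starRingEnd ℂ) w
  set A := (starRingEnd ℂ) a
  linear_combination h * (1 - W * z) * (1 + W * z) - h4 * (1 + W * w) * (1 + W * z)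
    + (w + z) * (hc * p * (1 - W * z) + 2 * W * h4)

/-! ### The sequence model of the Hardy space -/

/-- The Hardy space, as the Hilbert space of square-summable Taylor coefficient sequences. -/
noncomputable abbrev Ell2 := lp (fun _ : ℕ => ℂ) 2

theorem memℓp_two_iff (c : ℕ → ℂ) :
    Memℓp c 2 ↔ Summable (fun n => ‖c n‖ ^ 2) := by
  rw [memℓp_gen_iff (by norm_num)]
  simp

/-- The sequence `0, c 0, c 1, …`. -/
def shiftSeq (c : ℕ → ℂ) : ℕ → ℂ
  | 0 => 0
  | n + 1 => c n

theorem memℓp_shiftSeq (g : Ell2) : Memℓp (shiftSeq g) 2 := by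
  rw [memℓp_two_iff, ← summable_nat_add_iff 1]
  exact (memℓp_two_iff _).mp (lp.memℓp g)

/-- Multiplication by `z`: the unilateral shift, an isometry of `Ell2`. -/
noncomputable def shift : Ell2 →ₗᵢ[ℂ] Ell2 where
  toFun g := ⟨shiftSeq g, memℓp_shiftSeq g⟩
  map_add' g h := by
    ext n
    cases n with
    | zero => exact (add_zero (0 : ℂ)).symm
    | succ n => rfl
  map_smul' r g := by
    ext n
    cases n <;> simp [shiftSeq]
  norm_map' g := by
    have h1 := lp.hasSum_norm (p := 2) (by norm_num) (⟨shiftSeq g, memℓp_shiftSeq g⟩ : Ell2)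
    have h2 := (lp.hasSum_norm (p := 2) (by norm_num) g)
    have h3 := HasSum.zero_add (f := fun n => ‖shiftSeq g n‖ ^ (2 : ENNReal).toReal) h2
    have h4 := h1.unique h3
    simp only [shiftSeq] at h4
    simp at h4
    exact h4

/-- The constant function `1`. -/
noncomputable def delta0 : Ell2 := lp.single 2 0 1

theorem inner_delta0_shift (g : Ell2) : inner ℂ delta0 (shift g) = 0 := by
  rw [delta0, lp.inner_single_left]
  simp [shift, shiftSeq]

theorem memℓp_pow (z : ℂ) (hz : ‖z‖ < 1) : Memℓp (fun n => (starRingEnd ℂ) z ^ n) 2 := by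
  rw [memℓp_two_iff]
  have : ∀ n, ‖(starRingEnd ℂ) z ^ n‖ ^ 2 = (‖z‖ ^ 2) ^ n := by
    intro n; simp [← pow_mul, mul_comm]
  simp_rw [this]
  exact summable_geometric_of_lt_one (by positivity) (by nlinarith [norm_nonneg z])

/-- Point evaluation at `z`, written as the inner product with the reproducing kernel, whose
coefficients are `conj z ^ n`. -/
noncomputable def evalAt (z : ℂ) (hz : ‖z‖ < 1) : Ell2 →L[ℂ] ℂ :=
  innerSL ℂ (⟨fun n => (starRingEnd ℂ) z ^ n, memℓp_pow z hz⟩ : Ell2)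

theorem hasSum_evalAt (z : ℂ) (hz : ‖z‖ < 1) (g : Ell2) :
    HasSum (fun n => g n * z ^ n) (evalAt z hz g) := by
  have h := lp.hasSum_inner (𝕜 := ℂ) (G := fun _ : ℕ => ℂ)
    (⟨fun n => (starRingEnd ℂ) z ^ n, memℓp_pow z hz⟩ : Ell2) g
  simpa [evalAt] using h

theorem evalAt_shift (z : ℂ) (hz : ‖z‖ < 1) (g : Ell2) :
    evalAt z hz (shift g) = z * evalAt z hz g := by
  refine (hasSum_evalAt z hz (shift g)).unique ?_
  have h := HasSum.zero_add (f := fun n => shift g n * z ^ n) (m := z * evalAt z hz g) (by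
    have h0 : HasSum (fun n => z * (g n * z ^ n)) (z * evalAt z hz g) :=
      (hasSum_evalAt z hz g).mul_left z
    convert h0 using 2 with n
    change g n * z ^ (n + 1) = z * (g n * z ^ n)
    ring)
  simpa [shift, shiftSeq] using h

theorem evalAt_delta0 (z : ℂ) (hz : ‖z‖ < 1) : evalAt z hz delta0 = 1 := by
  refine (hasSum_evalAt z hz delta0).unique ?_
  convert hasSum_single (f := fun n => delta0 n * z ^ n) 0 ?_ using 1
  · simp [delta0]
  · intro n hn
    simp [delta0, lp.single_apply, hn]

/-! ### Wandering vectors of a Möbius transform of an isometry -/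

section
variable {E : Type*} [NormedAddCommGroup E] [InnerProductSpace ℂ E]

/-- A unit vector orthogonal to the range of an isometry has an orthonormal orbit. -/
theorem wandering (M : E →ₗᵢ[ℂ] E) (e : E) (he : ‖e‖ = 1) (h : ∀ g, inner ℂ e (M g) = 0) :
    Orthonormal ℂ (fun n : ℕ => M^[n] e) := by
  have hpos : ∀ n m, inner ℂ (M^[n] e) (M^[n + m + 1] e) = 0 := by
    intro n
    induction n with
    | zero => intro m; simpa [Function.iterate_succ_apply'] using h _
    | succ n ih =>
      intro m
      rw [show n + 1 + m + 1 = (n + m + 1) + 1 by ring, Function.iterate_succ_apply',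
        Function.iterate_succ_apply', M.inner_map_map, ih]
  refine ⟨fun n => ?_, fun i j hij => ?_⟩
  · induction n with
    | zero => simpa
    | succ n ih =>
      beta_reduce at ih ⊢
      rw [Function.iterate_succ_apply', M.norm_map, ih]
  · rcases lt_or_gt_of_ne hij with hlt | hlt
    · obtain ⟨m, rfl⟩ := Nat.exists_eq_add_of_lt hlt
      exact hpos i m
    · obtain ⟨m, rfl⟩ := Nat.exists_eq_add_of_lt hlt
      exact inner_eq_zero_symm.mp (hpos j m)

variable [CompleteSpace E]

/-- The operator `1 - conj w • S`, invertible since `‖conj w • S‖ < 1`. -/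
noncomputable def resolventUnit (S : E →ₗᵢ[ℂ] E) (w : ℂ) (hw : ‖w‖ < 1) : (E →L[ℂ] E)ˣ :=
  Units.oneSub ((starRingEnd ℂ) w • S.toContinuousLinearMap) (by
    calc _ ≤ ‖(starRingEnd ℂ) w‖ * ‖S.toContinuousLinearMap‖ := norm_smul_le _ _
      _ ≤ ‖w‖ * 1 := by
        rw [RCLike.norm_conj]
        gcongr
        exact S.norm_toContinuousLinearMap_le
      _ < 1 := by simpa)

/-- The inverse of `1 - conj w • S`. -/
noncomputable def resolv (S : E →ₗᵢ[ℂ] E) (w : ℂ) (hw : ‖w‖ < 1) : E →L[ℂ] E :=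
  ((resolventUnit S w hw)⁻¹ : (E →L[ℂ] E)ˣ)

theorem resolv_spec (S : E →ₗᵢ[ℂ] E) (w : ℂ) (hw : ‖w‖ < 1) (g : E) :
    resolv S w hw g - (starRingEnd ℂ) w • S (resolv S w hw g) = g := by
  have h : (resolventUnit S w hw : E →L[ℂ] E) * resolv S w hw = 1 := Units.mul_inv _
  have := congrArg (fun T : E →L[ℂ] E => T g) h
  simpa [resolventUnit] using this

/-- `φ_w(S) = (w - S)(1 - conj w • S)⁻¹`. It is an isometry because expanding both squares gives
`‖w • u - S u‖ = ‖u - conj w • S u‖` for every `u`. For the shift `S` this is multiplication by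
the Blaschke factor `φ_w`. -/
noncomputable def blaschke (S : E →ₗᵢ[ℂ] E) (w : ℂ) (hw : ‖w‖ < 1) : E →ₗᵢ[ℂ] E where
  toLinearMap := ((w • (1 : E →L[ℂ] E) - S.toContinuousLinearMap) * resolv S w hw : E →L[ℂ] E)
  norm_map' g := by
    conv_rhs => rw [← resolv_spec S w hw g]
    set u := resolv S w hw g with hu
    have : ‖w • u - S u‖ = ‖u - (starRingEnd ℂ) w • S u‖ := by
      rw [← sq_eq_sq₀ (norm_nonneg _) (norm_nonneg _), norm_sub_sq (𝕜 := ℂ), norm_sub_sq (𝕜 := ℂ)]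
      simp only [norm_smul, S.norm_map, RCLike.norm_conj, inner_smul_left, inner_smul_right]
      ring
    simpa [← hu] using this

theorem blaschke_apply (S : E →ₗᵢ[ℂ] E) (w : ℂ) (hw : ‖w‖ < 1) (g : E) :
    blaschke S w hw g = w • resolv S w hw g - S (resolv S w hw g) := by
  simp [blaschke]

/-- If `d` is orthogonal to the range of `S`, then `(1 - conj w • S)⁻¹ d` is orthogonal to the range
of `φ_w(S)`. For the shift and `d = 1` this says that the kernel function at `w` is orthogonal to
the functions divisible by `φ_w`. -/
theorem inner_kernel_blaschke (S : E →ₗᵢ[ℂ] E) (w : ℂ) (hw : ‖w‖ < 1) (d : E)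
    (hd : ∀ g, inner ℂ d (S g) = 0) (g : E) :
    inner ℂ (resolv S w hw d) (blaschke S w hw g) = 0 := by
  rw [blaschke_apply]
  set h := resolv S w hw g
  have h1 : inner ℂ (resolv S w hw d) (S h) = w * inner ℂ (resolv S w hw d) h := by
    conv_lhs => rw [← sub_add_cancel (resolv S w hw d)
      ((starRingEnd ℂ) w • S (resolv S w hw d)), resolv_spec]
    rw [inner_add_left, hd, inner_smul_left, S.inner_map_map]
    simp
  rw [inner_sub_right, inner_smul_right, h1, sub_self]

theorem summable_wandering (M : E →ₗᵢ[ℂ] E) (e : E) (he : e ≠ 0)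
    (h : ∀ g, inner ℂ e (M g) = 0) (c : ℕ → ℂ) (hc : Summable fun n => ‖c n‖ ^ 2) :
    Summable fun n => c n • M^[n] e := by
  have hn : (‖e‖ : ℂ) ≠ 0 := by simpa using he
  have ho := wandering M ((‖e‖ : ℂ)⁻¹ • e) (norm_smul_inv_norm he)
    (fun g => by rw [inner_smul_left, h, mul_zero])
  have hs := (ho.orthogonalFamily.summable_iff_norm_sq_summable (fun n => c n)).mpr hc
  have hit : ∀ n (r : ℂ), M^[n] (r • e) = r • M^[n] e := by
    intro n r
    induction n with
    | zero => rfl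
    | succ n ih => rw [Function.iterate_succ_apply', Function.iterate_succ_apply', ih, map_smul]
  convert hs.const_smul (‖e‖ : ℂ) using 2 with n
  rw [LinearIsometry.toSpanSingleton_apply, hit, smul_comm (c n), smul_inv_smul₀ hn]

end

/-! ### Möbius composition on the Hardy space -/

/-- Composition with `φ_w` preserves `H²`. If `f = ∑ c n z ^ n`, the functions
`φ_w ^ n / (1 - conj w z)` are orthogonal of equal norm, so `G = ∑ c n φ_w ^ n / (1 - conj w z)`
is in `H²`, and `f ∘ φ_w = (1 - conj w z) G`. -/
theorem memH2_comp (w : ℂ) (hw : ‖w‖ < 1) (f : ℂ → ℂ) (hf : MemH2 f) :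
    MemH2 (fun z => f (phi w z)) := by
  obtain ⟨c, hc, hfc⟩ := hf
  set M := blaschke shift w hw
  set k := resolv shift w hw delta0 with hk
  have hres : ∀ (z : ℂ) (hz : ‖z‖ < 1) (g : Ell2),
      (1 - (starRingEnd ℂ) w * z) * evalAt z hz (resolv shift w hw g) = evalAt z hz g := by
    intro z hz g
    conv_rhs => rw [← resolv_spec shift w hw g]
    rw [map_sub, map_smul, evalAt_shift, smul_eq_mul]
    ring
  have hM : ∀ (z : ℂ) (hz : ‖z‖ < 1) (g : Ell2),
      evalAt z hz (M g) = phi w z * evalAt z hz g := by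
    intro z hz g
    rw [blaschke_apply, map_sub, map_smul, evalAt_shift, ← hres z hz g, ← mul_assoc,
      phi_mul_denom w z hw hz, smul_eq_mul]
    ring
  have hk0 : k ≠ 0 := by
    intro h0
    have := hres 0 (by simp) delta0
    rw [← hk, h0, evalAt_delta0] at this
    simp at this
  have hMn : ∀ (z : ℂ) (hz : ‖z‖ < 1) (n : ℕ),
      evalAt z hz (M^[n] k) = phi w z ^ n * evalAt z hz k := by
    intro z hz n
    induction n with
    | zero => simp
    | succ n ih => rw [Function.iterate_succ_apply', hM, ih]; ring
  obtain ⟨G, hG⟩ := summable_wandering M k hk0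
    (inner_kernel_blaschke shift w hw delta0 inner_delta0_shift) c hc
  let F : Ell2 := G - (starRingEnd ℂ) w • shift G
  refine ⟨F, (memℓp_two_iff _).mp (lp.memℓp F), fun z hz => ?_⟩
  convert hasSum_evalAt z hz F using 1
  have h1 : evalAt z hz F = (1 - (starRingEnd ℂ) w * z) * evalAt z hz G := by
    simp only [F]
    rw [map_sub, map_smul, evalAt_shift, smul_eq_mul]
    ring
  rw [h1]
  refine (hfc _ (norm_phi w z hw hz)).unique ?_
  have h3 : HasSum (fun n => (1 - (starRingEnd ℂ) w * z) * evalAt z hz (c n • M^[n] k))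
      ((1 - (starRingEnd ℂ) w * z) * evalAt z hz G) :=
    (hG.mapL (evalAt z hz)).mul_left _
  convert h3 using 2 with n
  have h2 := hres z hz delta0
  rw [evalAt_delta0] at h2
  rw [map_smul, hMn, smul_eq_mul]
  linear_combination -(c n * phi w z ^ n) * h2

/-- The case `ε = 1` treats even functions and the case `ε = -1` odd ones. -/
theorem key (ε : ℂ) (a : ℂ) (ha : ‖a‖ < 1) (f : ℂ → ℂ) (hf : MemH2 f) :
    (∀ z : ℂ, ‖z‖ < 1 → f (phi a z) = ε * f z) ↔
      ∃ h : ℂ → ℂ, MemH2 h ∧ (∀ z : ℂ, ‖z‖ < 1 → h (-z) = ε * h z) ∧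
        ∀ z : ℂ, ‖z‖ < 1 → f z = h (phi (omegaPt a) z) := by
  have hw := (omegaPt_spec a ha).1
  constructor
  · intro h
    refine ⟨fun z => f (phi (omegaPt a) z), memH2_comp _ hw f hf, fun z hz => ?_, fun z hz => ?_⟩
    · simp only
      rw [← phi_phi_omegaPt a z ha hz, h _ (norm_phi _ z hw hz)]
    · simp only
      rw [phi_phi _ z hw hz]
  · rintro ⟨h, -, hh, hfh⟩ z hz
    have hu := norm_phi _ z hw hz
    have e : phi a z = phi (omegaPt a) (-phi (omegaPt a) z) := by
      rw [← phi_phi_omegaPt a _ ha hu, phi_phi _ z hw hz]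
    rw [hfh _ (norm_phi a z ha hz), e, phi_phi _ _ hw (by simpa using hu), hh _ hu, hfh z hz]

/-- For `a` in the open unit disk and `f ∈ H²`: `f ∘ φ_a = f` iff `f = h ∘ φ_{ω_a}`
for some even `h ∈ H²`, and `f ∘ φ_a = −f` iff `f = h ∘ φ_{ω_a}` for some odd
`h ∈ H²`. That is, `N(C_a − 1) = C_{ω_a}(𝓔)` and `N(C_a + 1) = C_{ω_a}(𝓞)`. -/
theorem stmt7 (a : ℂ) (ha : ‖a‖ < 1) (f : ℂ → ℂ) (hf : MemH2 f) :
    ((∀ z : ℂ, ‖z‖ < 1 → f (phi a z) = f z) ↔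
      ∃ h : ℂ → ℂ, MemH2 h ∧ (∀ z : ℂ, ‖z‖ < 1 → h (-z) = h z) ∧
        ∀ z : ℂ, ‖z‖ < 1 → f z = h (phi (omegaPt a) z)) ∧
    ((∀ z : ℂ, ‖z‖ < 1 → f (phi a z) = - f z) ↔
      ∃ h : ℂ → ℂ, MemH2 h ∧ (∀ z : ℂ, ‖z‖ < 1 → h (-z) = - h z) ∧
        ∀ z : ℂ, ‖z‖ < 1 → f z = h (phi (omegaPt a) z)) := by
  constructor
  · simpa using key 1 a ha f hf
  · simpa using key (-1) a ha f hf
end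

section
/- Let a ∈ 𝔻. For all complex polynomials f and g, the functions f ∘ φ_a and g ∘ φ_a belong to H² and ⟨f ∘ φ_a, g ∘ φ_a⟩ = (1 − |a|²) · (1/(2π)) · ∫₀^{2π} f(e^{iθ}) · conj(g(e^{iθ})) / |1 − conj(a)·e^{iθ}|² dθ. (This expresses that C_a*C_a equals (1 − |a|²) times the Toeplitz operator with symbol 1/|1 − conj(a)z|².) -/
open Metric Real ComplexConjugate

/-- The moment `⟪W · U ^ m · conj U ^ n⟫` of a real weight `W` and a unimodular `U` with
`⟪W · U ^ k⟫ = α ^ k` for all `k`. -/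
noncomputable def mixedMoment (α : ℂ) (m n : ℕ) : ℂ :=
  if n ≤ m then α ^ (m - n) else conj (α ^ (n - m))

lemma circleIntegrable_of_sphere {h : ℂ → ℂ} (hh : ContinuousOn h (sphere 0 1)) :
    CircleIntegrable h 0 1 := hh.circleIntegrable zero_le_one

lemma circleAverage_conj {h : ℂ → ℂ} (hh : ContinuousOn h (sphere 0 1)) :
    circleAverage (fun z => conj (h z)) 0 1 = conj (circleAverage h 0 1) :=
  (Complex.conjCLE : ℂ →L[ℝ] ℂ).circleAverage_comp_comm (circleIntegrable_of_sphere hh)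

lemma circleAverage_const_mul (u : ℂ) (h : ℂ → ℂ) :
    circleAverage (fun z => u * h z) 0 1 = u * circleAverage h 0 1 := by
  simpa using circleAverage_fun_smul (a := u) (f := h) (c := 0) (R := 1)

lemma circleAverage_congr_unit {h₁ h₂ : ℂ → ℂ} (h : ∀ z : ℂ, ‖z‖ = 1 → h₁ z = h₂ z) :
    circleAverage h₁ 0 1 = circleAverage h₂ 0 1 :=
  circleAverage_congr_sphere fun z hz => h z (by simpa using hz)

/-! ### Moments of a unimodular function -/

lemma circleAverage_pow_mul_conj_pow {W U : ℂ → ℂ} {α : ℂ}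
    (hWc : ContinuousOn W (sphere 0 1)) (hUc : ContinuousOn U (sphere 0 1))
    (hW : ∀ z : ℂ, ‖z‖ = 1 → conj (W z) = W z) (hU : ∀ z : ℂ, ‖z‖ = 1 → ‖U z‖ = 1)
    (hα : ∀ k : ℕ, circleAverage (fun z => W z * U z ^ k) 0 1 = α ^ k) (m n : ℕ) :
    circleAverage (fun z => W z * (U z ^ m * conj (U z) ^ n)) 0 1 = mixedMoment α m n := by
  have hUU : ∀ z : ℂ, ‖z‖ = 1 → U z * conj (U z) = 1 := fun z hz => by
    rw [Complex.mul_conj']; simp [hU z hz]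
  unfold mixedMoment
  split_ifs with hmn
  · rw [← hα]
    refine circleAverage_congr_unit fun z hz => ?_
    obtain ⟨k, rfl⟩ := Nat.exists_eq_add_of_le hmn
    rw [Nat.add_sub_cancel_left, pow_add, mul_right_comm (U z ^ n), ← mul_pow, hUU z hz]
    simp
  · rw [← hα, ← circleAverage_conj (h := fun z => W z * U z ^ (n - m)) (hWc.mul (hUc.pow _))]
    refine circleAverage_congr_unit fun z hz => ?_
    obtain ⟨k, rfl⟩ := Nat.exists_eq_add_of_le (not_le.1 hmn).le
    rw [Nat.add_sub_cancel_left, pow_add, ← mul_assoc (U z ^ m), ← mul_pow, hUU z hz]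
    simp [hW z hz]

/-- The mean of `W · f(U) · conj g(U)` is a sesquilinear form in `f` and `g` that involves `W` and
`U` only through the number `α`. -/
lemma circleAverage_eval_mul_conj_eval {W U : ℂ → ℂ} {α : ℂ}
    (hWc : ContinuousOn W (sphere 0 1)) (hUc : ContinuousOn U (sphere 0 1))
    (hW : ∀ z : ℂ, ‖z‖ = 1 → conj (W z) = W z) (hU : ∀ z : ℂ, ‖z‖ = 1 → ‖U z‖ = 1)
    (hα : ∀ k : ℕ, circleAverage (fun z => W z * U z ^ k) 0 1 = α ^ k) (f g : Polynomial ℂ) :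
    circleAverage (fun z => W z * (f.eval (U z) * conj (g.eval (U z)))) 0 1 =
      ∑ i ∈ Finset.range (f.natDegree + 1), ∑ j ∈ Finset.range (g.natDegree + 1),
        f.coeff i * conj (g.coeff j) * mixedMoment α i j := by
  have hexp : ∀ z, W z * (f.eval (U z) * conj (g.eval (U z))) =
      ∑ i ∈ Finset.range (f.natDegree + 1), ∑ j ∈ Finset.range (g.natDegree + 1),
        f.coeff i * conj (g.coeff j) * (W z * (U z ^ i * conj (U z) ^ j)) := fun z => by
    rw [Polynomial.eval_eq_sum_range, Polynomial.eval_eq_sum_range, map_sum, Finset.sum_mul_sum,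
      Finset.mul_sum]
    refine Finset.sum_congr rfl fun i _ => ?_
    rw [Finset.mul_sum]
    refine Finset.sum_congr rfl fun j _ => ?_
    rw [map_mul, map_pow]; ring
  have hUc' : ContinuousOn (fun z => conj (U z)) (sphere 0 1) :=
    Complex.continuous_conj.comp_continuousOn hUc
  have hc : ∀ i j : ℕ, ContinuousOn
      (fun z => f.coeff i * conj (g.coeff j) * (W z * (U z ^ i * conj (U z) ^ j))) (sphere 0 1) :=
    fun i j => continuousOn_const.mul (hWc.mul ((hUc.pow i).mul (hUc'.pow j)))
  simp_rw [hexp]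
  rw [circleAverage_fun_sum fun i _ => circleIntegrable_of_sphere
    (continuousOn_finsetSum _ fun j _ => hc i j)]
  refine Finset.sum_congr rfl fun i _ => ?_
  rw [circleAverage_fun_sum fun j _ => circleIntegrable_of_sphere (hc i j)]
  refine Finset.sum_congr rfl fun j _ => ?_
  rw [circleAverage_const_mul, circleAverage_pow_mul_conj_pow hWc hUc hW hU hα]

/-! ### Parseval's identity -/

lemma hasSum_circleAverage {u : ℕ → ℂ} {h : ℕ → ℂ → ℂ} {H : ℂ → ℂ} {B : ℝ}
    (hu : Summable fun n => ‖u n‖) (hc : ∀ n, ContinuousOn (h n) (sphere 0 1))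
    (hB : ∀ n, ∀ z : ℂ, ‖z‖ = 1 → ‖h n z‖ ≤ B)
    (hs : ∀ z : ℂ, ‖z‖ = 1 → HasSum (fun n => u n * h n z) (H z)) :
    HasSum (fun n => u n * circleAverage (h n) 0 1) (circleAverage H 0 1) := by
  have hn : ∀ θ : ℝ, ‖circleMap 0 1 θ‖ = 1 := fun θ => by simp
  simp_rw [← circleAverage_const_mul, circleAverage_def]
  refine HasSum.const_smul _ ?_
  refine intervalIntegral.hasSum_integral_of_dominated_convergence (fun n _ => ‖u n‖ * B)
    (fun n => ?_) (fun n => ?_) ?_ ?_ ?_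
  · refine Continuous.aestronglyMeasurable (continuous_const.mul ?_)
    exact (hc n).comp_continuous (continuous_circleMap 0 1) fun θ => by simp
  · refine .of_forall fun θ _ => ?_
    rw [norm_mul]
    exact mul_le_mul_of_nonneg_left (hB n _ (hn θ)) (norm_nonneg _)
  · exact .of_forall fun θ _ => hu.mul_right B
  · exact intervalIntegrable_const
  · exact .of_forall fun θ _ => hs _ (hn θ)

lemma circleAverage_pow_mul_conj_pow_self (n k : ℕ) :
    circleAverage (fun z => z ^ n * conj z ^ k) 0 1 = if k = n then 1 else 0 := by
  have h := circleAverage_pow_mul_conj_pow (W := fun _ => 1) (U := fun z => z) (α := 0)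
    continuousOn_const continuousOn_id (by simp) (fun z hz => hz) (fun k => by
      have hd : DiffContOnCl ℂ (fun z : ℂ => 1 * z ^ k) (ball 0 |1|) :=
        Differentiable.diffContOnCl (by fun_prop)
      simpa using hd.circleAverage) n k
  simp only [one_mul] at h
  rw [h, mixedMoment]
  split_ifs with h1 h2 h2
  · simp [h2]
  · exact zero_pow (by omega)
  · omega
  · rw [zero_pow (by omega), map_zero]

lemma circleAverage_pow_mul_conj {d : ℕ → ℂ} {G : ℂ → ℂ} (hd : Summable fun n => ‖d n‖)
    (hG : ∀ z : ℂ, ‖z‖ = 1 → HasSum (fun n => d n * z ^ n) (G z)) (n : ℕ) :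
    circleAverage (fun z => z ^ n * conj (G z)) 0 1 = conj (d n) := by
  have h := hasSum_circleAverage (u := fun k => conj (d k)) (h := fun k z => z ^ n * conj z ^ k)
    (H := fun z => z ^ n * conj (G z)) (B := 1) (by simpa using hd)
    (fun k => by
      have := Complex.continuous_conj
      exact ((continuous_pow n).mul (this.pow k)).continuousOn)
    (fun k z hz => by simp [hz])
    (fun z hz => by
      have := (Complex.hasSum_conj'.2 (hG z hz)).mul_left (z ^ n)
      convert! this using 2
      simp only [map_mul, map_pow]; ring)
  simp only [circleAverage_pow_mul_conj_pow_self] at h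
  refine h.unique ?_
  convert! hasSum_ite_eq n (conj (d n)) using 2 with k
  split_ifs with hk <;> simp [hk]

/-- Parseval's identity for absolutely summable Taylor coefficients. -/
lemma tsum_mul_conj_eq_circleAverage {c d : ℕ → ℂ} {F G : ℂ → ℂ}
    (hc : Summable fun n => ‖c n‖) (hd : Summable fun n => ‖d n‖)
    (hGc : ContinuousOn G (sphere 0 1))
    (hF : ∀ z : ℂ, ‖z‖ = 1 → HasSum (fun n => c n * z ^ n) (F z))
    (hG : ∀ z : ℂ, ‖z‖ = 1 → HasSum (fun n => d n * z ^ n) (G z)) :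
    ∑' n, c n * conj (d n) = circleAverage (fun z => F z * conj (G z)) 0 1 := by
  obtain ⟨B, hB⟩ := (isCompact_sphere (0 : ℂ) 1).exists_bound_of_continuousOn hGc
  have h := hasSum_circleAverage (u := c) (h := fun n z => z ^ n * conj (G z))
    (H := fun z => F z * conj (G z)) (B := B) hc
    (fun n => (continuous_pow n).continuousOn.mul (Complex.continuous_conj.comp_continuousOn hGc))
    (fun n z hz => by simpa [hz] using hB z (by simpa using hz))
    (fun z hz => by simpa only [mul_assoc] using (hF z hz).mul_right (conj (G z)))
  simp only [circleAverage_pow_mul_conj hd hG] at h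
  exact h.tsum_eq

/-! ### Taylor coefficients of functions holomorphic past the unit circle -/

lemma exists_coeff_of_differentiableOn {F : ℂ → ℂ} {R : ℝ} (hR : 1 < R)
    (hF : DifferentiableOn ℂ F (closedBall 0 R)) :
    ∃ c : ℕ → ℂ, (Summable fun n => ‖c n‖) ∧
      ∀ z : ℂ, ‖z‖ ≤ 1 → HasSum (fun n => c n * z ^ n) (F z) := by
  lift R to NNReal using by linarith
  have h := hF.hasFPowerSeriesOnBall (by exact_mod_cast zero_lt_one.trans hR)
  have hs : ∀ z : ℂ, ‖z‖ ≤ 1 → HasSum (fun n => (cauchyPowerSeries F 0 R).coeff n * z ^ n) (F z) := by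
    intro z hz
    have := h.hasSum (y := z) (by
      rw [mem_eball_zero_iff]
      have : ‖z‖₊ < R := by rw [← NNReal.coe_lt_coe]; exact hz.trans_lt hR
      exact_mod_cast this)
    simpa [mul_comm] using this
  exact ⟨_, by simpa using (hs 1 (by simp)).summable.norm, hs⟩

lemma coeff_unique {F : ℂ → ℂ} {c d : ℕ → ℂ}
    (hc : ∀ z : ℂ, ‖z‖ < 1 → HasSum (fun n => c n * z ^ n) (F z))
    (hd : ∀ z : ℂ, ‖z‖ < 1 → HasSum (fun n => d n * z ^ n) (F z)) : c = d := by
  have key : ∀ e : ℕ → ℂ, (∀ z : ℂ, ‖z‖ < 1 → HasSum (fun n => e n * z ^ n) (F z)) →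
      HasFPowerSeriesAt F (.ofScalars ℂ e) 0 := fun e he => by
    rw [hasFPowerSeriesAt_iff]
    filter_upwards [ball_mem_nhds (0 : ℂ) one_pos] with z hz
    simpa [mul_comm, FormalMultilinearSeries.coeff_ofScalars] using he z (by simpa using hz)
  have h := (key c hc).eq_formalMultilinearSeries (key d hd)
  funext n
  simpa [FormalMultilinearSeries.coeff_ofScalars] using congrArg (fun p => p.coeff n) h

/-! ### The Möbius involution -/

lemma one_sub_conj_mul_ne_zero {a z : ℂ} (h : ‖a‖ * ‖z‖ < 1) : 1 - conj a * z ≠ 0 := by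
  intro h0
  have h1 : ‖conj a * z‖ = 1 := by rw [← sub_eq_zero.1 h0, norm_one]
  rw [norm_mul, RCLike.norm_conj] at h1
  linarith

lemma differentiableOn_phi {a : ℂ} {s : Set ℂ} (hs : ∀ z ∈ s, ‖a‖ * ‖z‖ < 1) :
    DifferentiableOn ℂ (phi a) s := by
  unfold phi
  exact DifferentiableOn.div (by fun_prop) (by fun_prop)
    fun z hz => one_sub_conj_mul_ne_zero (hs z hz)

lemma norm_one_sub_conj_mul (a : ℂ) {z : ℂ} (hz : ‖z‖ = 1) : ‖1 - conj a * z‖ = ‖z - a‖ := by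
  have h : 1 - conj a * z = z * conj (z - a) := by
    rw [map_sub, mul_sub, Complex.mul_conj', hz]; push_cast; ring
  rw [h, norm_mul, RCLike.norm_conj, hz, one_mul]

lemma norm_phi_s8 {a : ℂ} (ha : ‖a‖ < 1) {z : ℂ} (hz : ‖z‖ = 1) : ‖phi a z‖ = 1 := by
  have h := norm_ne_zero_iff.2 (one_sub_conj_mul_ne_zero (a := a) (z := z) (by simpa [hz]))
  rw [phi, norm_div, norm_sub_rev, ← norm_one_sub_conj_mul a hz, div_self h]

/-- The weight `(1 - |a|²) / |1 - conj a · z|²`, real but regarded as complex-valued; on the unit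
circle it is the Poisson kernel at `a`. -/
noncomputable def poissonWeight (a z : ℂ) : ℂ :=
  (((1 - ‖a‖ ^ 2) / ‖1 - conj a * z‖ ^ 2 : ℝ) : ℂ)

lemma continuousOn_poissonWeight {a : ℂ} (ha : ‖a‖ < 1) :
    ContinuousOn (poissonWeight a) (sphere 0 1) := by
  refine Complex.continuous_ofReal.comp_continuousOn (ContinuousOn.div (by fun_prop) (by fun_prop) ?_)
  intro z hz
  have hz : ‖z‖ = 1 := by simpa using hz
  exact pow_ne_zero 2 (norm_ne_zero_iff.2 (one_sub_conj_mul_ne_zero (by simpa [hz])))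

lemma circleAverage_poissonWeight_mul_pow {a : ℂ} (ha : ‖a‖ < 1) (k : ℕ) :
    circleAverage (fun z => poissonWeight a z * z ^ k) 0 1 = a ^ k := by
  have hd : DiffContOnCl ℂ (fun z : ℂ => z ^ k) (ball 0 1) :=
    Differentiable.diffContOnCl (by fun_prop)
  rw [← hd.circleAverage_poissonKernel_smul' (w := a) (by simpa using ha)]
  refine circleAverage_congr_unit fun z hz => ?_
  simp only [poissonWeight, norm_one_sub_conj_mul a hz, sub_zero, hz, one_pow, Complex.real_smul]

/-- Both circle means have all moments equal to those of evaluation at `a`, so they agree. -/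
lemma circleAverage_comp_phi {a : ℂ} (ha : ‖a‖ < 1) (f g : Polynomial ℂ) :
    circleAverage (fun z => f.eval (phi a z) * conj (g.eval (phi a z))) 0 1 =
      circleAverage (fun z => poissonWeight a z * (f.eval z * conj (g.eval z))) 0 1 := by
  have hle : ∀ z ∈ closedBall (0 : ℂ) 1, ‖a‖ * ‖z‖ < 1 := fun z hz => by
    have hz : ‖z‖ ≤ 1 := by simpa using hz
    nlinarith [norm_nonneg a, norm_nonneg z]
  have hφ := differentiableOn_phi hle
  have h1 := circleAverage_eval_mul_conj_eval (W := fun _ => 1) (U := phi a) (α := a)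
    continuousOn_const (hφ.continuousOn.mono sphere_subset_closedBall) (by simp)
    (fun z hz => norm_phi_s8 ha hz) (fun k => by
      have hd : DiffContOnCl ℂ (fun z : ℂ => 1 * phi a z ^ k) (ball 0 |1|) := by
        rw [abs_one]
        exact (((hφ.pow k).const_mul 1).mono closure_ball_subset_closedBall).diffContOnCl
      simpa [phi] using hd.circleAverage) f g
  have h2 := circleAverage_eval_mul_conj_eval (W := poissonWeight a) (U := fun z => z) (α := a)
    (continuousOn_poissonWeight ha) continuousOn_id (fun z _ => Complex.conj_ofReal _)
    (fun z hz => hz) (circleAverage_poissonWeight_mul_pow ha) f g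
  simp only [one_mul] at h1
  rw [h1, h2]

lemma differentiableOn_eval_phi {a : ℂ} (ha : ‖a‖ < 1) (f : Polynomial ℂ) :
    ∃ R : ℝ, 1 < R ∧ DifferentiableOn ℂ (fun z => f.eval (phi a z)) (closedBall 0 R) := by
  -- `2 / (1 + |a|)` lies strictly between `1` and `1 / |a|`, the modulus of the pole of `φ_a`.
  have h0 := norm_nonneg a
  refine ⟨2 / (1 + ‖a‖), by rw [lt_div_iff₀ (by linarith)]; linarith, ?_⟩
  refine f.differentiable.comp_differentiableOn (differentiableOn_phi fun z hz => ?_)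
  have hz : ‖z‖ ≤ 2 / (1 + ‖a‖) := by simpa using hz
  calc ‖a‖ * ‖z‖ ≤ ‖a‖ * (2 / (1 + ‖a‖)) := mul_le_mul_of_nonneg_left hz h0
    _ < 1 := by rw [← mul_div_assoc, div_lt_one (by linarith)]; linarith

lemma exists_coeff_eval_phi {a : ℂ} (ha : ‖a‖ < 1) (f : Polynomial ℂ) :
    ∃ c : ℕ → ℂ, (Summable fun n => ‖c n‖) ∧
      ∀ z : ℂ, ‖z‖ ≤ 1 → HasSum (fun n => c n * z ^ n) (f.eval (phi a z)) := by
  obtain ⟨R, hR, hd⟩ := differentiableOn_eval_phi ha f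
  exact exists_coeff_of_differentiableOn hR hd

lemma memH2_eval_phi {a : ℂ} (ha : ‖a‖ < 1) (f : Polynomial ℂ) :
    MemH2 (fun z => f.eval (phi a z)) := by
  obtain ⟨c, hc, hs⟩ := exists_coeff_eval_phi ha f
  refine ⟨c, ?_, fun z hz => hs z hz.le⟩
  refine Summable.of_norm_bounded_eventually_nat hc ?_
  filter_upwards [hc.tendsto_atTop_zero.eventually_le_const zero_lt_one] with n hn
  rw [norm_pow, norm_norm]
  nlinarith [norm_nonneg (c n)]

/-- For `a` in the open unit disk and complex polynomials `f, g`: `f ∘ φ_a` and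
`g ∘ φ_a` belong to `H²`, and
`⟨f ∘ φ_a, g ∘ φ_a⟩ = (1 − |a|²)·(1/2π)·∫₀^{2π} f(e^{iθ})·conj(g(e^{iθ}))/|1 − conj a·e^{iθ}|² dθ`.
(This expresses `C_a* C_a = (1 − |a|²)·T_{1/|1 − conj a·z|²}`.) -/
theorem stmt8 (a : ℂ) (ha : ‖a‖ < 1) (f g : Polynomial ℂ) :
    MemH2 (fun z => f.eval (phi a z)) ∧ MemH2 (fun z => g.eval (phi a z)) ∧
    ∀ c d : ℕ → ℂ, IsH2Rep (fun z => f.eval (phi a z)) c →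
      IsH2Rep (fun z => g.eval (phi a z)) d →
      (∑' n, c n * (starRingEnd ℂ) (d n)) =
        ((1 - ‖a‖ ^ 2 : ℝ) : ℂ) * (1 / (2 * (Real.pi : ℂ))) *
          ∫ θ in (0 : ℝ)..(2 * Real.pi),
            f.eval (Complex.exp (θ * Complex.I)) *
              (starRingEnd ℂ) (g.eval (Complex.exp (θ * Complex.I))) /
              ((‖1 - (starRingEnd ℂ) a * Complex.exp (θ * Complex.I)‖ ^ 2 : ℝ) : ℂ) := by
  refine ⟨memH2_eval_phi ha f, memH2_eval_phi ha g, fun c d hc hd => ?_⟩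
  obtain ⟨c', hc's, hc'⟩ := exists_coeff_eval_phi ha f
  obtain ⟨d', hd's, hd'⟩ := exists_coeff_eval_phi ha g
  obtain rfl : c = c' := coeff_unique hc.2 fun z hz => hc' z hz.le
  obtain rfl : d = d' := coeff_unique hd.2 fun z hz => hd' z hz.le
  obtain ⟨R, hR, hG⟩ := differentiableOn_eval_phi ha g
  have hGc : ContinuousOn (fun z => g.eval (phi a z)) (sphere 0 1) :=
    hG.continuousOn.mono (sphere_subset_closedBall.trans (closedBall_subset_closedBall hR.le))
  rw [tsum_mul_conj_eq_circleAverage hc's hd's hGc (fun z hz => hc' z hz.le)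
    (fun z hz => hd' z hz.le), circleAverage_comp_phi ha, circleAverage_def, Complex.real_smul]
  have hpi : (((2 * π)⁻¹ : ℝ) : ℂ) = 1 / (2 * (π : ℂ)) := by simp
  rw [hpi, mul_comm _ (1 / (2 * (π : ℂ))), mul_assoc (1 / (2 * (π : ℂ)))]
  congr 1
  rw [← intervalIntegral.integral_const_mul]
  refine intervalIntegral.integral_congr fun θ _ => ?_
  simp only [poissonWeight, circleMap, zero_add, Complex.ofReal_one, one_mul]
  push_cast
  ring
end
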